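/- Let $k \in \mathbb{Z}$ with $|k| > 1$ and $t \in (-1,1]$. Define $A(k,t) \subseteq \mathbb{Z}$ as follows: $A(k,t) = \{k\}$ if $t \in [-2/3,-1/3] \cup [1/3,2/3]$; $A(k,t) = \{k, -k\}$ if $t \in (-1/3,1/3)$; $A(k,t) = \{k, -k-1\}$ if $t \in (2/3,1]$; $A(k,t) = \{k, -k+1\}$ if $t \in (-1,-2/3)$. Then for every $n \in \mathbb{Z}$ with $n \notin A(k,t)$, the inequality $|(2n+t)^2 - (2k+t)^2| \ge \frac{4}{3}(2|k| - 1)$ holds. -/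

import Mathlib

open Classical in
/-- The index set `A(k,t)` for `k : ℤ` and `t ∈ (-1,1]`. Within `(-1,1]` the last branch is exactly
`t ∈ [-2/3,-1/3] ∪ [1/3,2/3]`; at the four break points `t = ±1/3, ±2/3` the set is `{k}`, the
smaller of the two sets attached to the adjacent intervals. -/
noncomputable def Akt (k : ℤ) (t : ℝ) : Set ℤ :=
  if t ∈ Set.Ioo (-1 / 3 : ℝ) (1 / 3) then {k, -k}
  else if t ∈ Set.Ioc (2 / 3 : ℝ) 1 then {k, -k - 1}
  else if t ∈ Set.Ioo (-1 : ℝ) (-2 / 3) then {k, -k + 1}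
  else {k}

/-- If `n ∉ A(k,t)`, then `n ≠ k` and `|n + k + t| ≥ 1/3` whenever `n + k ∈ {-1, 0, 1}`. -/
theorem ne_and_le_abs_of_notMem_Akt {k n : ℤ} {t : ℝ} (ht : t ∈ Set.Ioc (-1 : ℝ) 1)
    (hn : n ∉ Akt k t) :
    n ≠ k ∧ (n + k = 0 → 1 / 3 ≤ |t|) ∧ (n + k = 1 → -2 / 3 ≤ t) ∧ (n + k = -1 → t ≤ 2 / 3) := by
  obtain ⟨h1, h2⟩ := ht
  unfold Akt at hn
  simp only [Set.mem_Ioo, Set.mem_Ioc] at hn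
  refine ⟨?_, fun h => ?_, fun h => ?_, fun h => ?_⟩
  · rintro rfl
    split_ifs at hn <;> simp at hn
  · by_contra! hc
    obtain ⟨ha, hb⟩ := abs_lt.mp hc
    rw [if_pos ⟨by linarith, hb⟩] at hn
    exact hn (Or.inr (show n = -k by omega))
  · by_contra! hc
    rw [if_neg (fun H => by linarith [H.1]), if_neg (fun H => by linarith [H.1]),
      if_pos ⟨h1, hc⟩] at hn
    exact hn (Or.inr (show n = -k + 1 by omega))
  · by_contra! hc
    rw [if_neg (fun H => by linarith [H.2]), if_pos ⟨hc, h2⟩] at hn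
    exact hn (Or.inr (show n = -k - 1 by omega))

theorem statement4 (k : ℤ) (hk : 1 < |k|) (t : ℝ) (ht : t ∈ Set.Ioc (-1 : ℝ) 1)
    (n : ℤ) (hn : n ∉ Akt k t) :
    |(2 * (n : ℝ) + t) ^ 2 - (2 * (k : ℝ) + t) ^ 2| ≥ (4 / 3) * (2 * |(k : ℝ)| - 1) := by
  obtain ⟨hne, h0, hp, hm⟩ := ne_and_le_abs_of_notMem_Akt ht hn
  have hfac : |(2 * (n : ℝ) + t) ^ 2 - (2 * (k : ℝ) + t) ^ 2|
      = 4 * (|(n : ℝ) - k| * |(n : ℝ) + k + t|) := by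
    rw [← abs_mul, ← abs_of_pos (show (0 : ℝ) < 4 by norm_num), ← abs_mul]
    congr 1
    ring
  have hK : (2 : ℝ) ≤ |(k : ℝ)| := by exact_mod_cast hk
  have hd : (1 : ℝ) ≤ |(n : ℝ) - k| := by
    exact_mod_cast Int.one_le_abs (sub_ne_zero.mpr hne)
  have htri : 2 * |(k : ℝ)| ≤ |(n : ℝ) - k| + |(n : ℝ) + k| := by
    have h := abs_sub ((n : ℝ) + k) ((n : ℝ) - k)
    rw [show (n : ℝ) + k - (n - k) = 2 * k by ring, abs_mul, abs_two] at h
    linarith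
  have hsmall : |(n : ℝ) + k| ≤ 1 → 1 / 3 ≤ |(n : ℝ) + k + t| →
      2 * |(k : ℝ)| - 1 ≤ 3 * (|(n : ℝ) - k| * |(n : ℝ) + k + t|) := by
    intro h h'
    nlinarith
  suffices H : 2 * |(k : ℝ)| - 1 ≤ 3 * (|(n : ℝ) - k| * |(n : ℝ) + k + t|) by
    rw [hfac]
    linarith
  have hcases : n + k = 0 ∨ n + k = 1 ∨ n + k = -1 ∨ 2 ≤ |n + k| := by
    rw [le_abs]
    omega
  rcases hcases with h | h | h | h
  · have e : (n : ℝ) + k = 0 := by exact_mod_cast h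
    apply hsmall <;> rw [e]
    · simp
    · simpa using h0 h
  · have e : (n : ℝ) + k = 1 := by exact_mod_cast h
    apply hsmall <;> rw [e]
    · simp
    · exact le_abs.mpr (Or.inl (by linarith [hp h]))
  · have e : (n : ℝ) + k = -1 := by exact_mod_cast h
    apply hsmall <;> rw [e]
    · simp
    · exact le_abs.mpr (Or.inr (by linarith [hm h]))
  · have h2 : (2 : ℝ) ≤ |(n : ℝ) + k| := by exact_mod_cast h
    have ht1 : |t| ≤ 1 := abs_le.mpr ⟨ht.1.le, ht.2⟩
    have h3 : |(n : ℝ) + k| - 1 ≤ |(n : ℝ) + k + t| := by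
      have h4 := abs_sub ((n : ℝ) + k + t) t
      rw [add_sub_cancel_right] at h4
      linarith
    nlinarith [mul_le_mul_of_nonneg_left h3 (zero_le_one.trans hd),
      mul_nonneg (sub_nonneg.mpr hd) (sub_nonneg.mpr h2)]
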